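/- arXiv:math/0504600 — 5 statements merged into one kernel-verified Lean document; each statement's English description precedes it below -/
import Mathlib

section
/- For every k ∈ ℝ, there exists a nonconstant polynomial f ∈ ℝ[X] with T(f) = 0 if and only if k = −1/2 − m for some integer m ≥ 0 (i.e. k ∈ −1/2 + ℤ_{≤0}). -/
/-! Up to a shift in degree, `T` is diagonal on monomials: it sends `X ^ n` to
`(n + k * (1 - (-1) ^ n)) • X ^ (n - 1)`, so its kernel contains a nonconstant polynomial exactly
when one of these factors with `n ≠ 0` vanishes. The factor is `n` for even `n` and `n + 2 * k` for
odd `n`. -/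

open Polynomial

/-- The one-variable Dunkl operator on real polynomials:
`T f = f' + k ⬝ g` where `g` is the unique polynomial with `X * g = f(X) - f(-X)`. -/
noncomputable def dunklT (k : ℝ) (f : Polynomial ℝ) : Polynomial ℝ :=
  derivative f + C k * ((f - f.comp (-X)) /ₘ X)

theorem divByMonic_X_eq_divX {R : Type*} [Ring R] (p : R[X]) : p /ₘ X = p.divX := by
  ext n
  simpa using coeff_divByMonic_X_sub_C_rec p 0 n

theorem coeff_comp_neg_X {R : Type*} [Ring R] (p : R[X]) (n : ℕ) :
    (p.comp (-X)).coeff n = p.coeff n * (-1) ^ n := by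
  have hX : (-X : R[X]) = C (-1) * X := by simp
  rw [hX, comp_C_mul_X_coeff]

/-- The factor with which the Dunkl operator with parameter `k` sends `X ^ n` to a multiple of
`X ^ (n - 1)`, replacing the factor `n` of the derivative. It is indexed by the exponent of the
source monomial. -/
def dunklFactor (k : ℝ) (n : ℕ) : ℝ :=
  n + k * (1 - (-1) ^ n)

theorem dunklFactor_of_even (k : ℝ) {n : ℕ} (hn : Even n) : dunklFactor k n = n := by
  simp [dunklFactor, hn.neg_one_pow]

theorem dunklFactor_of_odd (k : ℝ) {n : ℕ} (hn : Odd n) : dunklFactor k n = n + 2 * k := by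
  rw [dunklFactor, hn.neg_one_pow]
  ring

theorem exists_dunklFactor_eq_zero_iff (k : ℝ) :
    (∃ n ≠ 0, dunklFactor k n = 0) ↔ ∃ m : ℕ, k = -(1 / 2) - m := by
  constructor
  · rintro ⟨n, hn, hzero⟩
    rcases n.even_or_odd with heven | hodd
    · rw [dunklFactor_of_even k heven] at hzero
      exact absurd (Nat.cast_eq_zero.mp hzero) hn
    · rw [dunklFactor_of_odd k hodd] at hzero
      obtain ⟨m, rfl⟩ := hodd
      push_cast at hzero
      exact ⟨m, by linarith⟩
  · rintro ⟨m, rfl⟩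
    refine ⟨2 * m + 1, by simp, ?_⟩
    rw [dunklFactor_of_odd _ (odd_two_mul_add_one m)]
    push_cast
    ring

theorem coeff_dunklT (k : ℝ) (f : ℝ[X]) (n : ℕ) :
    (dunklT k f).coeff n = dunklFactor k (n + 1) * f.coeff (n + 1) := by
  rw [dunklT, coeff_add, coeff_derivative, coeff_C_mul, divByMonic_X_eq_divX, coeff_divX,
    coeff_sub, coeff_comp_neg_X, dunklFactor]
  push_cast
  ring

theorem dunklT_eq_zero_iff (k : ℝ) (f : ℝ[X]) :
    dunklT k f = 0 ↔ ∀ n ≠ 0, dunklFactor k n = 0 ∨ f.coeff n = 0 := by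
  simp only [Polynomial.ext_iff, coeff_dunklT, coeff_zero, mul_eq_zero]
  refine ⟨fun h n hn ↦ ?_, fun h n ↦ h (n + 1) n.succ_ne_zero⟩
  obtain ⟨m, rfl⟩ := Nat.exists_eq_succ_of_ne_zero hn
  exact h m

theorem exists_dunklT_eq_zero_iff_exists_dunklFactor_eq_zero (k : ℝ) :
    (∃ f : ℝ[X], f.natDegree ≠ 0 ∧ dunklT k f = 0) ↔ ∃ n ≠ 0, dunklFactor k n = 0 := by
  simp only [dunklT_eq_zero_iff]
  constructor
  · rintro ⟨f, hdeg, hker⟩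
    have hlead : f.coeff f.natDegree ≠ 0 :=
      leadingCoeff_ne_zero.mpr (ne_zero_of_natDegree_gt hdeg.bot_lt)
    exact ⟨f.natDegree, hdeg, (hker _ hdeg).resolve_right hlead⟩
  · rintro ⟨n, hn, hzero⟩
    refine ⟨X ^ n, by rwa [natDegree_X_pow], fun i _ ↦ ?_⟩
    rcases eq_or_ne i n with rfl | hi
    · exact .inl hzero
    · exact .inr (by rw [coeff_X_pow, if_neg hi])

/-- There exists a nonconstant real polynomial killed by the one-variable Dunkl
operator `T` if and only if `k ∈ -1/2 + ℤ_{≤ 0}`. -/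
theorem dunkl_kernel_nonconstant_iff (k : ℝ) :
    (∃ f : Polynomial ℝ, f.natDegree ≠ 0 ∧ dunklT k f = 0) ↔
      ∃ m : ℕ, k = -(1/2 : ℝ) - (m : ℝ) :=
  (exists_dunklT_eq_zero_iff_exists_dunklFactor_eq_zero k).trans (exists_dunklFactor_eq_zero_iff k)
end

section
/- Let k > 0 be real. For every polynomial f ∈ ℝ[X] and every x ∈ ℝ with x ≠ 0, the function χ(f) is differentiable at x and (χ(f))'(x) + k·(χ(f)(x) − χ(f)(−x))/x = χ(f')(x); that is, T ∘ χ = χ ∘ d/dx on polynomial functions. -/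
/-!
Let `w(t) = (1-t)^(k-1) (1+t)^k` be the weight of `χ` and `v(t) = (1-t) w(t) = (1-t)^k (1+t)^k`.
Differentiation under the integral sign gives `(χ f)'(x) = α ∫ t f'(xt) w(t) dt`, which falls short
of `χ(f')(x)` by `α ∫ f'(xt) v(t) dt`. Since `v'(t) = k (w(-t) - w(t))` and `v(±1) = 0`, integrating
the latter by parts and substituting `t ↦ -t` turns it into `k (χ f(x) - χ f(-x)) / x`.
-/

open Polynomial intervalIntegral

/-- The normalizing constant `α = (∫_{-1}^{1} (1-t)^(k-1) (1+t)^k dt)⁻¹`. -/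
noncomputable def dunklAlpha (k : ℝ) : ℝ :=
  (∫ t in (-1 : ℝ)..1, (1 - t) ^ (k - 1) * (1 + t) ^ k)⁻¹

/-- The intertwining operator `χ(f)(x) = α ∫_{-1}^{1} f(xt) (1-t)^(k-1) (1+t)^k dt`. -/
noncomputable def dunklChi (k : ℝ) (f : ℝ → ℝ) (x : ℝ) : ℝ :=
  dunklAlpha k * ∫ t in (-1 : ℝ)..1, f (x * t) * (1 - t) ^ (k - 1) * (1 + t) ^ k

open MeasureTheory Set

lemma hasDerivAt_integral_comp_mul_mul {f w : ℝ → ℝ} {a b : ℝ} (hf : ContDiff ℝ 1 f)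
    (hw : IntervalIntegrable w volume a b) (x : ℝ) :
    HasDerivAt (fun y => ∫ t in a..b, f (y * t) * w t)
      (∫ t in a..b, t * deriv f (x * t) * w t) x := by
  have : Continuous (deriv f) := hf.continuous_deriv_one
  have h_integrable (y : ℝ) : IntervalIntegrable (fun t => f (y * t) * w t) volume a b :=
    hw.continuousOn_mul (hf.continuous.comp (continuous_const_mul y)).continuousOn
  obtain ⟨C, hC⟩ := ((isCompact_closedBall x 1).prod
    (isCompact_uIcc (a := a) (b := b))).exists_bound_of_continuousOn
    (f := fun p : ℝ × ℝ => p.2 * deriv f (p.1 * p.2)) (by fun_prop)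
  have h_bound : ∀ t ∈ uIoc a b, ∀ y ∈ Metric.closedBall x 1,
      ‖t * deriv f (y * t) * w t‖ ≤ C * ‖w t‖ := fun t ht y hy => by
    rw [norm_mul]
    exact mul_le_mul_of_nonneg_right (hC (y, t) ⟨hy, uIoc_subset_uIcc ht⟩) (norm_nonneg _)
  have h_deriv (t y : ℝ) :
      HasDerivAt (fun y => f (y * t) * w t) (t * deriv f (y * t) * w t) y := by
    have h_comp := (hf.differentiable one_ne_zero (y * t)).hasDerivAt.comp y
      (hasDerivAt_mul_const t)
    exact (h_comp.congr_deriv (mul_comm _ _)).mul_const (w t)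
  exact (hasDerivAt_integral_of_dominated_loc_of_deriv_le (Metric.closedBall_mem_nhds x one_pos)
    (.of_forall fun y => (h_integrable y).aestronglyMeasurable_restrict_uIoc) (h_integrable x)
    (hw.continuousOn_mul (by fun_prop)).aestronglyMeasurable_restrict_uIoc
    (.of_forall h_bound) (hw.norm.const_mul C) (.of_forall fun t _ y _ => h_deriv t y)).2

/-- The Jacobi weight `(1-t)^a (1+t)^b` on `[-1, 1]`. The weight of `χ` has the exponents `k - 1`
and `k`. -/
noncomputable def jacobiWeight (a b t : ℝ) : ℝ := (1 - t) ^ a * (1 + t) ^ b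

section JacobiWeight

variable {a b t : ℝ}

lemma jacobiWeight_neg (a b t : ℝ) : jacobiWeight a b (-t) = jacobiWeight b a t := by
  rw [jacobiWeight, jacobiWeight, sub_neg_eq_add, ← sub_eq_add_neg, mul_comm]

lemma jacobiWeight_one (ha : a ≠ 0) (b : ℝ) : jacobiWeight a b 1 = 0 := by
  rw [jacobiWeight, sub_self, Real.zero_rpow ha, zero_mul]

lemma jacobiWeight_neg_one (a : ℝ) (hb : b ≠ 0) : jacobiWeight a b (-1) = 0 := by
  rw [jacobiWeight_neg, jacobiWeight_one hb]

lemma one_sub_mul_jacobiWeight_sub_one (ha : a ≠ 0) (b : ℝ) (ht : t ≤ 1) :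
    (1 - t) * jacobiWeight (a - 1) b t = jacobiWeight a b t := by
  have h_rpow : (1 - t) ^ a = (1 - t) ^ (a - 1) * (1 - t) := by
    simpa using Real.rpow_add_one' (y := a - 1) (sub_nonneg.2 ht) (by simpa using ha)
  rw [jacobiWeight, jacobiWeight, h_rpow]
  ring

lemma continuous_jacobiWeight (ha : 0 ≤ a) (hb : 0 ≤ b) : Continuous (jacobiWeight a b) :=
  ((continuous_const.sub continuous_id).rpow_const fun _ => .inr ha).mul
    ((continuous_const.add continuous_id).rpow_const fun _ => .inr hb)

lemma hasDerivAt_jacobiWeight (a b : ℝ) (ht : t ∈ Ioo (-1) 1) :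
    HasDerivAt (jacobiWeight a b) (b * jacobiWeight a (b - 1) t - a * jacobiWeight (a - 1) b t)
      t := by
  have h_sub := ((hasDerivAt_id t).const_sub 1).rpow_const (p := a)
    (.inl (sub_pos.2 ht.2).ne')
  have h_add := ((hasDerivAt_id t).const_add 1).rpow_const (p := b)
    (.inl (neg_lt_iff_pos_add'.1 ht.1).ne')
  refine (h_sub.mul h_add).congr_deriv ?_
  simp only [jacobiWeight, id]
  ring

lemma intervalIntegrable_jacobiWeight_neg_one_zero (a : ℝ) (hb : -1 < b) :
    IntervalIntegrable (jacobiWeight a b) volume (-1) 0 := by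
  have h_add : IntervalIntegrable (fun t : ℝ => (1 + t) ^ b) volume (-1) 0 := by
    simpa using (intervalIntegrable_rpow' (a := 0) (b := 1) hb).comp_add_left 1
  refine h_add.continuousOn_mul (ContinuousOn.rpow_const (by fun_prop) fun t ht => .inl ?_)
  rw [uIcc_of_le (by norm_num)] at ht
  linarith [ht.2]

lemma intervalIntegrable_jacobiWeight (ha : -1 < a) (hb : -1 < b) :
    IntervalIntegrable (jacobiWeight a b) volume (-1) 1 := by
  have h_right : IntervalIntegrable (jacobiWeight a b) volume 0 1 := by
    have h_left := (intervalIntegrable_jacobiWeight_neg_one_zero b ha).symm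
    simpa only [jacobiWeight_neg, neg_neg, neg_zero] using
      (IntervalIntegrable.iff_comp_neg (by finiteness)).1 h_left
  exact (intervalIntegrable_jacobiWeight_neg_one_zero a hb).trans h_right

lemma intervalIntegrable_mul_jacobiWeight (ha : -1 < a) (hb : -1 < b) {u : ℝ → ℝ}
    (hu : Continuous u) :
    IntervalIntegrable (fun t => u t * jacobiWeight a b t) volume (-1) 1 :=
  (intervalIntegrable_jacobiWeight ha hb).continuousOn_mul hu.continuousOn

lemma integral_deriv_mul_jacobiWeight (ha : 0 < a) (hb : 0 < b) {u : ℝ → ℝ}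
    (hu : ContDiff ℝ 1 u) :
    ∫ t in (-1 : ℝ)..1, deriv u t * jacobiWeight a b t =
      ∫ t in (-1 : ℝ)..1, u t * (a * jacobiWeight (a - 1) b t - b * jacobiWeight a (b - 1) t) := by
  have h_parts := integral_mul_deriv_eq_deriv_mul_of_hasDerivAt (a := -1) (b := 1)
    hu.continuous.continuousOn (continuous_jacobiWeight ha.le hb.le).continuousOn
    (fun t _ => (hu.differentiable one_ne_zero t).hasDerivAt)
    (fun t ht => hasDerivAt_jacobiWeight a b (by simpa using ht))
    (hu.continuous_deriv_one.intervalIntegrable _ _)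
    (((intervalIntegrable_jacobiWeight (by linarith) (by linarith)).const_mul b).sub
      ((intervalIntegrable_jacobiWeight (by linarith) (by linarith)).const_mul a))
  rw [jacobiWeight_one ha.ne', jacobiWeight_neg_one a hb.ne', mul_zero, mul_zero, sub_zero,
    zero_sub] at h_parts
  rw [← neg_eq_iff_eq_neg.2 h_parts, ← intervalIntegral.integral_neg]
  simp only [← mul_neg, neg_sub]

lemma integral_deriv_mul_jacobiWeight_self {k : ℝ} (hk : 0 < k) {u : ℝ → ℝ}
    (hu : ContDiff ℝ 1 u) :
    ∫ t in (-1 : ℝ)..1, deriv u t * jacobiWeight k k t =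
      k * ((∫ t in (-1 : ℝ)..1, u t * jacobiWeight (k - 1) k t) -
        ∫ t in (-1 : ℝ)..1, u (-t) * jacobiWeight (k - 1) k t) := by
  have h_reflect : ∫ t in (-1 : ℝ)..1, u (-t) * jacobiWeight (k - 1) k t =
      ∫ t in (-1 : ℝ)..1, u t * jacobiWeight k (k - 1) t := by
    simpa [jacobiWeight_neg] using
      intervalIntegral.integral_comp_neg (a := -1) (b := 1)
        fun t => u t * jacobiWeight k (k - 1) t
  rw [integral_deriv_mul_jacobiWeight hk hk hu, h_reflect,
    ← intervalIntegral.integral_sub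
      (intervalIntegrable_mul_jacobiWeight (by linarith) (by linarith) hu.continuous)
      (intervalIntegrable_mul_jacobiWeight (by linarith) (by linarith) hu.continuous),
    ← intervalIntegral.integral_const_mul]
  congr 1 with t
  ring

end JacobiWeight

section DunklChi

variable {k : ℝ} {f : ℝ → ℝ}

lemma dunklChi_eq_integral_jacobiWeight (k : ℝ) (f : ℝ → ℝ) (x : ℝ) :
    dunklChi k f x = dunklAlpha k * ∫ t in (-1 : ℝ)..1, f (x * t) * jacobiWeight (k - 1) k t := by
  simp only [dunklChi, jacobiWeight, mul_assoc]

lemma hasDerivAt_dunklChi (hk : 0 < k) (hf : ContDiff ℝ 1 f) (x : ℝ) :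
    HasDerivAt (dunklChi k f)
      (dunklAlpha k * ∫ t in (-1 : ℝ)..1, t * deriv f (x * t) * jacobiWeight (k - 1) k t) x := by
  rw [funext (dunklChi_eq_integral_jacobiWeight k f)]
  exact (hasDerivAt_integral_comp_mul_mul hf
    (intervalIntegrable_jacobiWeight (by linarith) (by linarith)) x).const_mul _

lemma dunklChi_eq_integral_mul_add (hk : 0 < k) (hf : Continuous f) (x : ℝ) :
    dunklChi k f x =
      dunklAlpha k * (∫ t in (-1 : ℝ)..1, t * f (x * t) * jacobiWeight (k - 1) k t) +
        dunklAlpha k * ∫ t in (-1 : ℝ)..1, f (x * t) * jacobiWeight k k t := by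
  rw [dunklChi_eq_integral_jacobiWeight, ← mul_add,
    ← intervalIntegral.integral_add
      (intervalIntegrable_mul_jacobiWeight (by linarith) (by linarith) (by fun_prop))
      (intervalIntegrable_mul_jacobiWeight (by linarith) (by linarith) (by fun_prop))]
  congr 1
  refine intervalIntegral.integral_congr fun t ht => ?_
  rw [uIcc_of_le (by norm_num)] at ht
  simp only [← one_sub_mul_jacobiWeight_sub_one hk.ne' k ht.2]
  ring

lemma mul_dunklChi_sub_dunklChi_neg (hk : 0 < k) (hf : ContDiff ℝ 1 f) (x : ℝ) :
    k * (dunklChi k f x - dunklChi k f (-x)) =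
      x * (dunklAlpha k * ∫ t in (-1 : ℝ)..1, deriv f (x * t) * jacobiWeight k k t) := by
  have h_parts := integral_deriv_mul_jacobiWeight_self hk
    (hf.comp (contDiff_const.mul contDiff_id : ContDiff ℝ 1 fun t : ℝ => x * t))
  simp only [Function.comp_def, deriv_comp_mul_left, smul_eq_mul, mul_assoc,
    intervalIntegral.integral_const_mul, mul_neg] at h_parts
  simp only [dunklChi_eq_integral_jacobiWeight, neg_mul]
  linear_combination -dunklAlpha k * h_parts

end DunklChi

theorem dunkl_chi_intertwines_general {k : ℝ} (hk : 0 < k) {f : ℝ → ℝ} (hf : ContDiff ℝ 1 f)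
    {x : ℝ} (hx : x ≠ 0) :
    DifferentiableAt ℝ (dunklChi k f) x ∧
      deriv (dunklChi k f) x + k * (dunklChi k f x - dunklChi k f (-x)) / x =
        dunklChi k (deriv f) x := by
  have h_deriv := hasDerivAt_dunklChi hk hf x
  refine ⟨h_deriv.differentiableAt, ?_⟩
  rw [h_deriv.deriv, mul_dunklChi_sub_dunklChi_neg hk hf, mul_div_cancel_left₀ _ hx,
    ← dunklChi_eq_integral_mul_add hk hf.continuous_deriv_one]

/-- For `k > 0`, the operator `χ` intertwines the one-variable Dunkl operator `T`
with ordinary differentiation on polynomial functions: for every polynomial `f`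
and every `x ≠ 0`, `χ(f)` is differentiable at `x` and
`(χ f)'(x) + k (χ f (x) - χ f (-x))/x = χ(f')(x)`. -/
theorem dunkl_chi_intertwines (k : ℝ) (hk : 0 < k) (f : Polynomial ℝ) (x : ℝ) (hx : x ≠ 0) :
    DifferentiableAt ℝ (dunklChi k fun y => f.eval y) x ∧
      deriv (dunklChi k fun y => f.eval y) x +
          k * ((dunklChi k fun y => f.eval y) x - (dunklChi k fun y => f.eval y) (-x)) / x =
        (dunklChi k fun y => (derivative f).eval y) x := by
  have h_deriv : deriv (fun y => f.eval y) = fun y => (derivative f).eval y :=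
    funext fun _ => f.deriv
  rw [← h_deriv]
  exact dunkl_chi_intertwines_general hk (f.contDiff_aeval 1) hx
end

section
/- Suppose c = 1/2 + m with m ∈ ℤ_{≥0}. Then the subspace X^{2m+1}·ℂ[X] is stable under the operators x, s and T; it is the unique ℂ-linear subspace of ℂ[X] stable under x, s and T other than 0 and ℂ[X]; and the quotient module ℂ[X]/(X^{2m+1}·ℂ[X]), of dimension 2m+1, is irreducible (it is the simple module L(ℂ)). -/
/-!
Since `X T = X d/dX + c (s - 1)`, the Euler operator `X d/dX = X T - c (s - 1)` preserves every
subspace stable under `x`, `s` and `T`. Such a subspace is an ideal of `ℂ[X]`, say generated by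
`g ≠ 0`; then `g ∣ X g'`, so `X g'` is a scalar multiple of `g`, and as the monomials are
eigenvectors of `X d/dX` with distinct eigenvalues, `g` is a monomial. Finally, with
`w k = k + c ((-1)^k - 1)`, one has `T X^k = w k X^(k-1)`, so `X^n ℂ[X]` is stable exactly when
`w n = 0`; for `c = 1/2 + m` the zeros of `w` are `0` and `2m + 1`.
-/

open Polynomial

/-- The involution `s` of `ℂ[X]` determined by `X ↦ -X`. -/
noncomputable def cherednikS (f : Polynomial ℂ) : Polynomial ℂ := f.comp (-X)

/-- The one-variable Dunkl operator `T f = f' + c g`, where `g` is the unique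
polynomial with `X g = s(f) - f`. -/
noncomputable def cherednikT (c : ℂ) (f : Polynomial ℂ) : Polynomial ℂ :=
  derivative f + C c * ((cherednikS f - f) /ₘ X)

/-- A ℂ-subspace of `ℂ[X]` is a submodule for `H_{1,c}` when it is stable under
multiplication by `X`, under `s` and under the Dunkl operator `T`. -/
def IsCherednikStable (c : ℂ) (M : Submodule ℂ (Polynomial ℂ)) : Prop :=
  (∀ f ∈ M, X * f ∈ M) ∧ (∀ f ∈ M, cherednikS f ∈ M) ∧ (∀ f ∈ M, cherednikT c f ∈ M)

/-- The subspace `X^(2m+1) ℂ[X]` of `ℂ[X]`, as a ℂ-submodule. -/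
noncomputable def radicalSubmodule (m : ℕ) : Submodule ℂ (Polynomial ℂ) :=
  Submodule.restrictScalars ℂ (Ideal.span {X ^ (2 * m + 1)} : Ideal (Polynomial ℂ))

lemma coeff_X_mul_derivative {R : Type*} [Semiring R] (f : R[X]) (k : ℕ) :
    (X * derivative f).coeff k = f.coeff k * k := by
  cases k <;> simp [coeff_X_mul, coeff_derivative]

lemma eq_C_leadingCoeff_mul_X_pow_of_dvd_X_mul_derivative {R : Type*} [Semiring R]
    [IsLeftCancelMulZero R] [CharZero R] {f : R[X]} (h : f ∣ X * derivative f) :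
    f = C f.leadingCoeff * X ^ f.natDegree := by
  rcases eq_or_ne f 0 with rfl | hf
  · simp
  obtain ⟨q, hq⟩ := h
  have hq_natDegree : q.natDegree = 0 := by
    rcases eq_or_ne q 0 with rfl | hq0
    · exact natDegree_zero
    have hle : (X * derivative f).natDegree ≤ f.natDegree := by
      refine natDegree_le_iff_coeff_eq_zero.2 fun k hk => ?_
      rw [coeff_X_mul_derivative, coeff_eq_zero_of_natDegree_lt hk, zero_mul]
    rw [hq, natDegree_mul hf hq0] at hle
    omega
  obtain ⟨a, rfl⟩ := natDegree_eq_zero.1 hq_natDegree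
  have hcoeff (k : ℕ) : f.coeff k * k = f.coeff k * a := by
    rw [← coeff_X_mul_derivative, hq, coeff_mul_C]
  have ha : (f.natDegree : R) = a :=
    mul_left_cancel₀ (leadingCoeff_ne_zero.2 hf) (hcoeff f.natDegree)
  ext k
  rw [coeff_C_mul_X_pow]
  split_ifs with hk
  · rw [hk, coeff_natDegree]
  · by_contra hk0
    exact hk (Nat.cast_injective ((mul_left_cancel₀ hk0 (hcoeff k)).trans ha.symm))

lemma ideal_eq_bot_or_exists_eq_span_X_pow {K : Type*} [Field K] [CharZero K] {I : Ideal K[X]}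
    (hI : ∀ f ∈ I, X * derivative f ∈ I) :
    I = ⊥ ∨ ∃ n : ℕ, I = Ideal.span {X ^ n} := by
  obtain ⟨g, rfl⟩ := (IsPrincipalIdealRing.principal I).principal
  rcases eq_or_ne g 0 with rfl | hg
  · exact Or.inl (by simp)
  have hdvd : g ∣ X * derivative g :=
    Ideal.mem_span_singleton.1 (hI g (Ideal.mem_span_singleton_self g))
  refine Or.inr ⟨g.natDegree, ?_⟩
  have hunit : IsUnit (C g.leadingCoeff) := isUnit_C.2 (leadingCoeff_ne_zero.2 hg).isUnit
  rw [← Ideal.span_singleton_mul_left_unit hunit,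
    ← eq_C_leadingCoeff_mul_X_pow_of_dvd_X_mul_derivative hdvd]

lemma mul_mem_of_forall_X_mul_mem {R : Type*} [CommSemiring R] {M : Submodule R R[X]}
    (hM : ∀ f ∈ M, X * f ∈ M) (p : R[X]) {f : R[X]} (hf : f ∈ M) : p * f ∈ M := by
  simpa only [aeval_X_left_apply, smul_eq_mul] using
    aeval_apply_smul_mem_of_le_comap' (A := R[X]) hf p X hM

lemma finrank_quotient_restrictScalars_span_singleton {K : Type*} [Field K] (f : K[X]) :
    Module.finrank K (K[X] ⧸ (Ideal.span {f}).restrictScalars K) = f.natDegree :=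
  (Submodule.Quotient.restrictScalarsEquiv K (Ideal.span {f})).finrank_eq.trans
    finrank_quotient_span_eq_natDegree

lemma coeff_cherednikS (f : ℂ[X]) (k : ℕ) : (cherednikS f).coeff k = (-1) ^ k * f.coeff k := by
  have hX : (-X : ℂ[X]) = C (-1) * X := by simp
  rw [cherednikS, hX, comp_C_mul_X_coeff, mul_comm]

lemma X_mul_cherednikT (c : ℂ) (f : ℂ[X]) :
    X * cherednikT c f = X * derivative f + C c * (cherednikS f - f) := by
  have hX : (cherednikS f - f) %ₘ X = 0 := by
    rw [modByMonic_eq_zero_iff_dvd monic_X, X_dvd_iff, coeff_sub, coeff_cherednikS]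
    simp
  have hdiv : X * ((cherednikS f - f) /ₘ X) = cherednikS f - f := by
    simpa [hX] using modByMonic_add_div (cherednikS f - f) X
  rw [cherednikT, mul_add, mul_left_comm, hdiv]

/-- The scalar `w` with `T X^k = w X^(k-1)`, which governs stability of the ideals `X^k ℂ[X]`. It is
defined as the eigenvalue of `X T` on `X^k`, so that `k = 0` needs no exponent `k - 1`. -/
def dunklWeight (c : ℂ) (k : ℕ) : ℂ := k + c * ((-1) ^ k - 1)

lemma coeff_cherednikT (c : ℂ) (f : ℂ[X]) (k : ℕ) :
    (cherednikT c f).coeff k = dunklWeight c (k + 1) * f.coeff (k + 1) := by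
  rw [← coeff_X_mul, X_mul_cherednikT, coeff_add, coeff_X_mul_derivative, coeff_C_mul, coeff_sub,
    coeff_cherednikS, dunklWeight]
  ring

lemma dunklWeight_half_add_eq_zero_iff {m n : ℕ} :
    dunklWeight (1 / 2 + m) n = 0 ↔ n = 0 ∨ n = 2 * m + 1 := by
  rcases Nat.even_or_odd n with hn | hn
  · have hweight : dunklWeight (1 / 2 + m) n = n := by simp [dunklWeight, hn.neg_one_pow]
    rw [hweight, Nat.cast_eq_zero]
    grind
  · have hweight : dunklWeight (1 / 2 + m) n = n - (2 * m + 1 : ℕ) := by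
      rw [dunklWeight, hn.neg_one_pow]
      push_cast
      ring
    rw [hweight, sub_eq_zero, Nat.cast_inj]
    grind

lemma isCherednikStable_span_X_pow_iff {c : ℂ} {n : ℕ} :
    IsCherednikStable c ((Ideal.span {X ^ n}).restrictScalars ℂ) ↔ dunklWeight c n = 0 := by
  simp only [IsCherednikStable, Submodule.restrictScalars_mem, Ideal.mem_span_singleton]
  constructor
  · rintro ⟨-, -, hT⟩
    rcases n with _ | n
    · simp [dunklWeight]
    · have hcoeff := X_pow_dvd_iff.1 (hT (X ^ (n + 1)) dvd_rfl) n n.lt_succ_self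
      rwa [coeff_cherednikT, coeff_X_pow_self, mul_one] at hcoeff
  · intro hn
    refine ⟨fun f hf => hf.mul_left X, fun f hf => X_pow_dvd_iff.2 fun k hk => ?_,
      fun f hf => X_pow_dvd_iff.2 fun k hk => ?_⟩
    · rw [coeff_cherednikS, X_pow_dvd_iff.1 hf k hk, mul_zero]
    · rw [coeff_cherednikT]
      rcases (Nat.succ_le_of_lt hk).eq_or_lt with rfl | hk'
      · rw [hn, zero_mul]
      · rw [X_pow_dvd_iff.1 hf (k + 1) hk', mul_zero]

lemma IsCherednikStable.X_mul_derivative_mem {c : ℂ} {M : Submodule ℂ ℂ[X]}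
    (hM : IsCherednikStable c M) {f : ℂ[X]} (hf : f ∈ M) : X * derivative f ∈ M := by
  obtain ⟨hX, hS, hT⟩ := hM
  have h : X * derivative f = X * cherednikT c f - c • (cherednikS f - f) := by
    rw [X_mul_cherednikT, smul_eq_C_mul, add_sub_cancel_right]
  rw [h]
  exact M.sub_mem (hX _ (hT f hf)) (M.smul_mem c (M.sub_mem (hS f hf) hf))

lemma IsCherednikStable.eq_bot_or_exists_eq_span_X_pow {c : ℂ} {M : Submodule ℂ ℂ[X]}
    (hM : IsCherednikStable c M) :
    M = ⊥ ∨ ∃ n : ℕ, dunklWeight c n = 0 ∧ M = (Ideal.span {X ^ n}).restrictScalars ℂ := by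
  obtain ⟨I, rfl⟩ : ∃ I : Ideal ℂ[X], I.restrictScalars ℂ = M :=
    ⟨{ M with smul_mem' := fun p _ hf => mul_mem_of_forall_X_mul_mem hM.1 p hf }, rfl⟩
  rcases ideal_eq_bot_or_exists_eq_span_X_pow (fun _ => hM.X_mul_derivative_mem) with
    rfl | ⟨n, rfl⟩
  · exact Or.inl (Submodule.restrictScalars_bot ..)
  · exact Or.inr ⟨n, isCherednikStable_span_X_pow_iff.1 hM, rfl⟩

lemma IsCherednikStable.eq_bot_or_eq_top_or_eq_radicalSubmodule {m : ℕ} {M : Submodule ℂ ℂ[X]}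
    (hM : IsCherednikStable (1 / 2 + m) M) : M = ⊥ ∨ M = ⊤ ∨ M = radicalSubmodule m := by
  refine hM.eq_bot_or_exists_eq_span_X_pow.imp_right ?_
  rintro ⟨n, hn, rfl⟩
  rcases dunklWeight_half_add_eq_zero_iff.1 hn with rfl | rfl
  · exact Or.inl (by simp)
  · exact Or.inr rfl

/-- For `c = 1/2 + m` with `m ∈ ℤ_{≥0}`: the subspace `X^(2m+1) ℂ[X]` is stable under
`x`, `s` and `T`; it is the unique nontrivial proper stable subspace; and the quotient
`ℂ[X]/(X^(2m+1))` has dimension `2m+1` and is irreducible (every stable subspace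
containing it is itself or everything): it is the simple module `L(ℂ)`. -/
theorem radical_of_standard_module (c : ℂ) (m : ℕ) (hc : c = 1/2 + (m : ℂ)) :
    IsCherednikStable c (radicalSubmodule m) ∧
    (∀ M : Submodule ℂ (Polynomial ℂ), IsCherednikStable c M →
      M = ⊥ ∨ M = ⊤ ∨ M = radicalSubmodule m) ∧
    Module.finrank ℂ (Polynomial ℂ ⧸ radicalSubmodule m) = 2 * m + 1 ∧
    (∀ M : Submodule ℂ (Polynomial ℂ), IsCherednikStable c M →
      radicalSubmodule m ≤ M → M = radicalSubmodule m ∨ M = ⊤) := by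
  subst hc
  refine ⟨isCherednikStable_span_X_pow_iff.2 (dunklWeight_half_add_eq_zero_iff.2 (Or.inr rfl)),
    fun M hM => hM.eq_bot_or_eq_top_or_eq_radicalSubmodule,
    (finrank_quotient_restrictScalars_span_singleton _).trans (natDegree_X_pow _),
    fun M hM hle => ?_⟩
  rcases hM.eq_bot_or_eq_top_or_eq_radicalSubmodule with rfl | htop | hrad
  · exact Or.inl (le_bot_iff.1 hle).symm
  · exact Or.inr htop
  · exact Or.inl hrad
end

section
/- The images in H_{t,c} of the monomials x^a·ξ^b and x^a·s·ξ^b, for a, b ∈ ℕ, form a ℂ-basis of H_{t,c} (PBW theorem / triangular decomposition H_{t,c} ≅ ℂ[x] ⊗ ℂ[ℤ/2] ⊗ ℂ[ξ] in type A₁). -/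
/-!
The relations move every `x` to the left and every `ξ` to the right of `s`; the only exchange which
is not a change of sign is
`ξ x^a = x^a ξ + t a x^(a-1) - c (1 - (-1)^a) x^(a-1) s`.
Hence the span of the monomials `x^a s^e ξ^b` is stable under left multiplication by the
generators, and, as it contains `1`, it is the whole algebra.

For independence, turn the resulting formulas into operators on the free module on the symbols
`(a, e, b)`. They satisfy the defining relations, so the algebra acts on this module, and
`x^a s^e ξ^b` sends the basis vector `(0, 0, 0)` to the basis vector `(a, e, b)`.
-/

open FreeAlgebra

/-- The defining relations of the rational Cherednik algebra `H_{t,c}` of type `A₁`,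
on the free algebra on three generators `s = ι 0`, `x = ι 1`, `ξ = ι 2`:
`s² - 1`, `s x + x s`, `s ξ + ξ s` and `ξ x - x ξ - t 1 + 2 c s`. -/
inductive CherednikRel (t c : ℂ) : FreeAlgebra ℂ (Fin 3) → FreeAlgebra ℂ (Fin 3) → Prop
  | s_sq : CherednikRel t c (ι ℂ (0 : Fin 3) * ι ℂ (0 : Fin 3) - 1) 0
  | s_x : CherednikRel t c (ι ℂ (0 : Fin 3) * ι ℂ (1 : Fin 3) + ι ℂ (1 : Fin 3) * ι ℂ (0 : Fin 3)) 0
  | s_xi : CherednikRel t c (ι ℂ (0 : Fin 3) * ι ℂ (2 : Fin 3) + ι ℂ (2 : Fin 3) * ι ℂ (0 : Fin 3)) 0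
  | xi_x : CherednikRel t c
      (ι ℂ (2 : Fin 3) * ι ℂ (1 : Fin 3) - ι ℂ (1 : Fin 3) * ι ℂ (2 : Fin 3) -
        algebraMap ℂ (FreeAlgebra ℂ (Fin 3)) t + (2 * c) • ι ℂ (0 : Fin 3)) 0

/-- The rational Cherednik algebra `H_{t,c}` of type `A₁`. -/
abbrev CherednikA1 (t c : ℂ) := RingQuot (CherednikRel t c)

/-- The generator `s` of `H_{t,c}`. -/
noncomputable def CherednikA1.S (t c : ℂ) : CherednikA1 t c :=
  RingQuot.mkAlgHom ℂ (CherednikRel t c) (ι ℂ (0 : Fin 3))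

/-- The generator `x` of `H_{t,c}`. -/
noncomputable def CherednikA1.x (t c : ℂ) : CherednikA1 t c :=
  RingQuot.mkAlgHom ℂ (CherednikRel t c) (ι ℂ (1 : Fin 3))

/-- The generator `ξ` of `H_{t,c}`. -/
noncomputable def CherednikA1.xi (t c : ℂ) : CherednikA1 t c :=
  RingQuot.mkAlgHom ℂ (CherednikRel t c) (ι ℂ (2 : Fin 3))

section Span

variable {R A : Type*} [CommSemiring R] [Semiring A] [Algebra R A]

lemma toSubmodule_adjoin_le_span_of_mul_mem {s V : Set A} (one_mem : 1 ∈ Submodule.span R V)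
    (mul_mem : ∀ g ∈ s, ∀ v ∈ V, g * v ∈ Submodule.span R V) :
    Subalgebra.toSubmodule (Algebra.adjoin R s) ≤ Submodule.span R V := by
  rw [Algebra.adjoin_eq_span, Submodule.span_le]
  intro y hy
  induction hy using Submonoid.closure_induction_left with
  | one => exact one_mem
  | mul_left g hg y _ ih =>
    have span_le_comap : Submodule.span R V ≤ (Submodule.span R V).comap (LinearMap.mulLeft R g) :=
      Submodule.span_le.mpr (mul_mem g hg)
    exact span_le_comap ih

end Span

lemma neg_one_pow_toNat_not {M : Type*} [Monoid M] [HasDistribNeg M] (e : Bool) :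
    (-1 : M) ^ (!e).toNat = -(-1) ^ e.toNat := by
  cases e <;> simp

/-- The elements `s`, `x`, `ξ` of an `R`-algebra satisfy the defining relations of the rational
Cherednik algebra `H_{t,c}` of type `A₁`. -/
structure IsCherednikTriple {R A : Type*} [CommRing R] [Ring A] [Algebra R A] (t c : R)
    (s x ξ : A) : Prop where
  s_mul_s : s * s = 1
  s_mul_x : s * x = -(x * s)
  s_mul_xi : s * ξ = -(ξ * s)
  xi_mul_x : ξ * x = x * ξ + t • 1 - (2 * c) • s

/-- The normally ordered monomial `x^a s^e ξ^b`, where `(a, e, b) = p` and the exponent `e` of the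
involution `s` is encoded as a Boolean. -/
def pbwMonomial {A : Type*} [Monoid A] (s x ξ : A) (p : ℕ × Bool × ℕ) : A :=
  x ^ p.1 * (if p.2.1 then s else 1) * ξ ^ p.2.2

lemma map_pbwMonomial {A B F : Type*} [Monoid A] [Monoid B] [FunLike F A B] [MonoidHomClass F A B]
    (φ : F) (s x ξ : A) (p : ℕ × Bool × ℕ) :
    φ (pbwMonomial s x ξ p) = pbwMonomial (φ s) (φ x) (φ ξ) p := by
  simp only [pbwMonomial, map_mul, map_pow, apply_ite φ, map_one]

lemma x_mul_pbwMonomial {A : Type*} [Monoid A] (s x ξ : A) (a : ℕ) (e : Bool) (b : ℕ) :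
    x * pbwMonomial s x ξ (a, e, b) = pbwMonomial s x ξ (a + 1, e, b) := by
  simp only [pbwMonomial, pow_succ', mul_assoc]

namespace IsCherednikTriple

variable {R A : Type*} [CommRing R] [Ring A] [Algebra R A] {t c : R} {s x ξ : A}

lemma s_mul_x_pow (h : IsCherednikTriple t c s x ξ) (a : ℕ) :
    s * x ^ a = (-1 : R) ^ a • (x ^ a * s) := by
  induction a with
  | zero => simp
  | succ a ih =>
    calc s * x ^ (a + 1) = (-1 : R) ^ a • (x ^ a * (s * x)) := by
          rw [pow_succ, ← mul_assoc, ih, smul_mul_assoc, mul_assoc]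
      _ = (-1 : R) ^ (a + 1) • (x ^ (a + 1) * s) := by
          rw [h.s_mul_x, mul_neg, ← mul_assoc, ← pow_succ]
          module

lemma xi_mul_x_pow_succ (h : IsCherednikTriple t c s x ξ) (a : ℕ) :
    ξ * x ^ (a + 1) = x ^ (a + 1) * ξ + (t * (a + 1 : ℕ)) • x ^ a
      - (c * (1 - (-1) ^ (a + 1))) • (x ^ a * s) := by
  induction a with
  | zero =>
    simp only [zero_add, pow_one, pow_zero, one_mul, h.xi_mul_x, Nat.cast_one]
    module
  | succ a ih =>
    calc ξ * x ^ (a + 2)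
        = x ^ (a + 1) * (ξ * x) + (t * (a + 1 : ℕ)) • x ^ (a + 1)
          - (c * (1 - (-1) ^ (a + 1))) • (x ^ a * (s * x)) := by
          rw [pow_succ x (a + 1), ← mul_assoc, ih]
          simp only [add_mul, sub_mul, smul_mul_assoc, mul_assoc, ← pow_succ]
      _ = x ^ (a + 2) * ξ + (t * (a + 2 : ℕ)) • x ^ (a + 1)
          - (c * (1 - (-1) ^ (a + 2))) • (x ^ (a + 1) * s) := by
          rw [h.xi_mul_x, h.s_mul_x]
          simp only [mul_add, mul_sub, mul_neg, mul_smul_comm, mul_one, ← mul_assoc, ← pow_succ]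
          push_cast
          module

-- For `a = 0` both terms with the truncated exponent `a - 1` have coefficient `0`.
lemma xi_mul_x_pow (h : IsCherednikTriple t c s x ξ) (a : ℕ) :
    ξ * x ^ a = x ^ a * ξ + (t * a) • x ^ (a - 1)
      - (c * (1 - (-1) ^ a)) • (x ^ (a - 1) * s) := by
  cases a with
  | zero => simp
  | succ a => exact h.xi_mul_x_pow_succ a

lemma s_mul_ite (h : IsCherednikTriple t c s x ξ) (e : Bool) :
    s * (if e then s else 1) = if !e then s else 1 := by
  cases e <;> simp [h.s_mul_s]

lemma xi_mul_ite (h : IsCherednikTriple t c s x ξ) (e : Bool) :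
    ξ * (if e then s else 1) = (-1 : R) ^ e.toNat • ((if e then s else 1) * ξ) := by
  cases e <;> simp [h.s_mul_xi]

lemma s_mul_pbwMonomial (h : IsCherednikTriple t c s x ξ) (a : ℕ) (e : Bool) (b : ℕ) :
    s * pbwMonomial s x ξ (a, e, b) = (-1 : R) ^ a • pbwMonomial s x ξ (a, !e, b) := by
  simp only [pbwMonomial, ← h.s_mul_ite e, ← mul_assoc, h.s_mul_x_pow, smul_mul_assoc]

lemma xi_mul_pbwMonomial (h : IsCherednikTriple t c s x ξ) (a : ℕ) (e : Bool) (b : ℕ) :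
    ξ * pbwMonomial s x ξ (a, e, b) =
      (-1 : R) ^ e.toNat • pbwMonomial s x ξ (a, e, b + 1)
        + (t * a) • pbwMonomial s x ξ (a - 1, e, b)
        - (c * (1 - (-1) ^ a)) • pbwMonomial s x ξ (a - 1, !e, b) := by
  set σ : A := if e then s else 1 with hσ
  calc ξ * (x ^ a * σ * ξ ^ b)
      = x ^ a * (ξ * σ) * ξ ^ b + (t * a) • (x ^ (a - 1) * σ * ξ ^ b)
        - (c * (1 - (-1) ^ a)) • (x ^ (a - 1) * (s * σ) * ξ ^ b) := by
        rw [← mul_assoc, ← mul_assoc, h.xi_mul_x_pow]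
        simp only [add_mul, sub_mul, smul_mul_assoc, mul_assoc]
    _ = _ := by
        rw [h.xi_mul_ite, h.s_mul_ite]
        simp only [pbwMonomial, pow_succ', mul_smul_comm, smul_mul_assoc, mul_assoc, hσ]

theorem span_pbwMonomial_eq_top (h : IsCherednikTriple t c s x ξ)
    (adjoin_eq_top : Algebra.adjoin R {s, x, ξ} = ⊤) :
    Submodule.span R (Set.range (pbwMonomial s x ξ)) = ⊤ := by
  have mono_mem (p) : pbwMonomial s x ξ p ∈ Submodule.span R (Set.range (pbwMonomial s x ξ)) :=
    Submodule.subset_span ⟨p, rfl⟩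
  rw [eq_top_iff, ← Algebra.top_toSubmodule, ← adjoin_eq_top]
  refine toSubmodule_adjoin_le_span_of_mul_mem (by simpa [pbwMonomial] using mono_mem 0) ?_
  rintro g (rfl | rfl | rfl) _ ⟨⟨a, e, b⟩, rfl⟩
  · rw [h.s_mul_pbwMonomial]
    exact Submodule.smul_mem _ _ (mono_mem _)
  · rw [x_mul_pbwMonomial]
    exact mono_mem _
  · rw [h.xi_mul_pbwMonomial]
    exact sub_mem (add_mem (Submodule.smul_mem _ _ (mono_mem _))
      (Submodule.smul_mem _ _ (mono_mem _))) (Submodule.smul_mem _ _ (mono_mem _))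

end IsCherednikTriple

/-- The free `R`-module on the symbols `(a, e, b)`, which stand for the monomials `x^a s^e ξ^b`;
it carries the model of the left regular representation of `H_{t,c}`. -/
abbrev PBWModule (R : Type*) [CommRing R] := (ℕ × Bool × ℕ) →₀ R

namespace PBWModule

variable {R : Type*} [CommRing R]

/-- The basis vector of `PBWModule R` standing for `x^a s^e ξ^b`. -/
noncomputable abbrev vec (R : Type*) [CommRing R] (a : ℕ) (e : Bool) (b : ℕ) : PBWModule R :=
  Finsupp.single (a, e, b) 1

/-- Left multiplication by `s` in the model, read off from
`IsCherednikTriple.s_mul_pbwMonomial`. -/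
noncomputable def opS (R : Type*) [CommRing R] : Module.End R (PBWModule R) :=
  Finsupp.linearCombination R fun ⟨a, e, b⟩ => (-1 : R) ^ a • vec R a (!e) b

/-- Left multiplication by `x` in the model, read off from `x_mul_pbwMonomial`. -/
noncomputable def opX (R : Type*) [CommRing R] : Module.End R (PBWModule R) :=
  Finsupp.linearCombination R fun ⟨a, e, b⟩ => vec R (a + 1) e b

/-- Left multiplication by `ξ` in the model, read off from
`IsCherednikTriple.xi_mul_pbwMonomial`. -/
noncomputable def opXi (t c : R) : Module.End R (PBWModule R) :=
  Finsupp.linearCombination R fun ⟨a, e, b⟩ =>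
    (-1 : R) ^ e.toNat • vec R a e (b + 1) + (t * a) • vec R (a - 1) e b
      - (c * (1 - (-1) ^ a)) • vec R (a - 1) (!e) b

lemma opS_vec (a : ℕ) (e : Bool) (b : ℕ) :
    opS R (vec R a e b) = (-1 : R) ^ a • vec R a (!e) b := by
  rw [opS, Finsupp.linearCombination_single, one_smul]

lemma opX_vec (a : ℕ) (e : Bool) (b : ℕ) : opX R (vec R a e b) = vec R (a + 1) e b := by
  rw [opX, Finsupp.linearCombination_single, one_smul]

lemma opXi_vec (t c : R) (a : ℕ) (e : Bool) (b : ℕ) :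
    opXi t c (vec R a e b) = (-1 : R) ^ e.toNat • vec R a e (b + 1) + (t * a) • vec R (a - 1) e b
      - (c * (1 - (-1) ^ a)) • vec R (a - 1) (!e) b := by
  rw [opXi, Finsupp.linearCombination_single, one_smul]

lemma end_ext {f g : Module.End R (PBWModule R)}
    (h : ∀ a e b, f (vec R a e b) = g (vec R a e b)) : f = g :=
  Finsupp.lhom_ext' fun ⟨a, e, b⟩ => LinearMap.ext_ring (h a e b)

lemma opS_mul_opS : opS R * opS R = 1 := by
  refine end_ext fun a e b => ?_
  simp only [Module.End.mul_apply, Module.End.one_apply, opS_vec, map_smul, smul_smul,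
    Bool.not_not, ← mul_pow, neg_one_mul, neg_neg, one_pow, one_smul]

lemma opS_mul_opX : opS R * opX R = -(opX R * opS R) := by
  refine end_ext fun a e b => ?_
  simp only [Module.End.mul_apply, LinearMap.neg_apply, opS_vec, opX_vec, map_smul]
  module

lemma opS_mul_opXi (t c : R) : opS R * opXi t c = -(opXi t c * opS R) := by
  refine end_ext fun a e b => ?_
  cases a <;>
  · simp only [Module.End.mul_apply, LinearMap.neg_apply, opS_vec, opXi_vec, map_smul, map_add,
      map_sub, neg_one_pow_toNat_not, Bool.not_not, Nat.add_sub_cancel, Nat.cast_zero, pow_zero]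
    module

lemma opXi_mul_opX (t c : R) :
    opXi t c * opX R = opX R * opXi t c + t • 1 - (2 * c) • opS R := by
  refine end_ext fun a e b => ?_
  cases a <;>
  · simp only [Module.End.mul_apply, Module.End.one_apply, LinearMap.add_apply,
      LinearMap.sub_apply, LinearMap.smul_apply, opS_vec, opX_vec, opXi_vec, map_smul, map_add,
      map_sub, Nat.add_sub_cancel, Nat.cast_zero, Nat.cast_succ, pow_zero]
    module

theorem isCherednikTriple (t c : R) : IsCherednikTriple t c (opS R) (opX R) (opXi t c) where
  s_mul_s := opS_mul_opS
  s_mul_x := opS_mul_opX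
  s_mul_xi := opS_mul_opXi t c
  xi_mul_x := opXi_mul_opX t c

lemma opX_pow_vec (a : ℕ) (e : Bool) (b : ℕ) : (opX R ^ a) (vec R 0 e b) = vec R a e b := by
  induction a with
  | zero => simp
  | succ a ih => rw [pow_succ', Module.End.mul_apply, ih, opX_vec]

lemma opXi_pow_vec (t c : R) (b : ℕ) : (opXi t c ^ b) (vec R 0 false 0) = vec R 0 false b := by
  induction b with
  | zero => simp
  | succ b ih => simp [pow_succ', ih, opXi_vec]

lemma pbwMonomial_apply_vec (t c : R) (a : ℕ) (e : Bool) (b : ℕ) :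
    pbwMonomial (opS R) (opX R) (opXi t c) (a, e, b) (vec R 0 false 0) = vec R a e b := by
  have ite_vec : (if e then opS R else 1) (vec R 0 false b) = vec R 0 e b := by
    cases e <;> simp [opS_vec]
  simp only [pbwMonomial, Module.End.mul_apply, opXi_pow_vec, ite_vec, opX_pow_vec]

theorem linearIndependent_pbwMonomial (t c : R) :
    LinearIndependent R (pbwMonomial (opS R) (opX R) (opXi t c)) := by
  refine .of_comp (LinearMap.applyₗ (vec R 0 false 0)) ?_
  convert Finsupp.linearIndependent_single_one R (ℕ × Bool × ℕ) using 1
  exact funext fun ⟨a, e, b⟩ => pbwMonomial_apply_vec t c a e b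

end PBWModule

universe u v

/-- The `R`-algebra `A` is the rational Cherednik algebra `H_{t,c}` of type `A₁` over `R`, with
generators `s`, `x`, `ξ`: these generate `A`, and `A` is universal for the defining relations.
Test algebras in the universe of `R` suffice, since `H_{t,c}` itself lives there. -/
structure IsCherednikPresentation {R : Type u} {A : Type v} [CommRing R] [Ring A] [Algebra R A]
    (t c : R) (s x ξ : A) : Prop extends IsCherednikTriple t c s x ξ where
  adjoin_eq_top : Algebra.adjoin R {s, x, ξ} = ⊤
  exists_algHom : ∀ {B : Type u} [Ring B] [Algebra R B] {s' x' ξ' : B},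
    IsCherednikTriple t c s' x' ξ' → ∃ φ : A →ₐ[R] B, φ s = s' ∧ φ x = x' ∧ φ ξ = ξ'

theorem IsCherednikPresentation.linearIndependent_pbwMonomial {R : Type u} {A : Type v}
    [CommRing R] [Ring A] [Algebra R A] {t c : R} {s x ξ : A}
    (h : IsCherednikPresentation t c s x ξ) : LinearIndependent R (pbwMonomial s x ξ) := by
  obtain ⟨φ, hs, hx, hξ⟩ := h.exists_algHom (PBWModule.isCherednikTriple t c)
  have map_eq : φ ∘ pbwMonomial s x ξ =
      pbwMonomial (PBWModule.opS R) (PBWModule.opX R) (PBWModule.opXi t c) := by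
    ext1 p
    rw [Function.comp_apply, map_pbwMonomial, hs, hx, hξ]
  refine .of_comp φ.toLinearMap ?_
  rw [AlgHom.coe_toLinearMap, map_eq]
  exact PBWModule.linearIndependent_pbwMonomial t c

theorem cherednikA1_pbw_general {R : Type u} {A : Type v} [CommRing R] [Ring A] [Algebra R A]
    {t c : R} {s x ξ : A} (h : IsCherednikPresentation t c s x ξ) :
    LinearIndependent R (pbwMonomial s x ξ) ∧
      Submodule.span R (Set.range (pbwMonomial s x ξ)) = ⊤ :=
  ⟨h.linearIndependent_pbwMonomial, h.span_pbwMonomial_eq_top h.adjoin_eq_top⟩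

namespace CherednikA1

lemma isCherednikTriple (t c : ℂ) : IsCherednikTriple t c (S t c) (x t c) (xi t c) where
  s_mul_s := by
    simpa [S, sub_eq_zero] using RingQuot.mkAlgHom_rel ℂ (CherednikRel.s_sq (t := t) (c := c))
  s_mul_x := by
    simpa [S, x, add_eq_zero_iff_eq_neg] using
      RingQuot.mkAlgHom_rel ℂ (CherednikRel.s_x (t := t) (c := c))
  s_mul_xi := by
    simpa [S, xi, add_eq_zero_iff_eq_neg] using
      RingQuot.mkAlgHom_rel ℂ (CherednikRel.s_xi (t := t) (c := c))
  xi_mul_x := by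
    have rel := RingQuot.mkAlgHom_rel ℂ (CherednikRel.xi_x (t := t) (c := c))
    simp only [map_add, map_sub, map_mul, map_zero, map_smul, map_one,
      Algebra.algebraMap_eq_smul_one] at rel
    rw [← sub_eq_zero, ← rel, S, x, xi]
    abel

lemma adjoin_generators_eq_top (t c : ℂ) : Algebra.adjoin ℂ {S t c, x t c, xi t c} = ⊤ := by
  have generators_eq_image : {S t c, x t c, xi t c} =
      RingQuot.mkAlgHom ℂ (CherednikRel t c) '' Set.range (ι ℂ : Fin 3 → _) := by
    ext y
    simp [S, x, xi, Fin.exists_fin_succ, eq_comm]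
  rw [generators_eq_image, ← AlgHom.map_adjoin, adjoin_range_ι, Algebra.map_top,
    AlgHom.range_eq_top]
  exact RingQuot.mkAlgHom_surjective ℂ _

lemma exists_algHom {t c : ℂ} {B : Type*} [Ring B] [Algebra ℂ B] {s' x' ξ' : B}
    (h : IsCherednikTriple t c s' x' ξ') :
    ∃ φ : CherednikA1 t c →ₐ[ℂ] B, φ (S t c) = s' ∧ φ (x t c) = x' ∧ φ (xi t c) = ξ' := by
  have lift_rel ⦃p q⦄ (hpq : CherednikRel t c p q) :
      FreeAlgebra.lift ℂ ![s', x', ξ'] p = FreeAlgebra.lift ℂ ![s', x', ξ'] q := by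
    rcases hpq with _ | _ | _ | _
    · simp [h.s_mul_s]
    · simp [h.s_mul_x]
    · simp [h.s_mul_xi]
    · simp only [map_add, map_sub, map_mul, map_zero, map_smul, map_one, lift_ι_apply,
        Matrix.cons_val, h.xi_mul_x, Algebra.algebraMap_eq_smul_one]
      abel
  exact ⟨RingQuot.liftAlgHom ℂ ⟨FreeAlgebra.lift ℂ ![s', x', ξ'], lift_rel⟩,
    by simp [S], by simp [x], by simp [xi]⟩

theorem isCherednikPresentation (t c : ℂ) :
    IsCherednikPresentation t c (S t c) (x t c) (xi t c) where
  toIsCherednikTriple := isCherednikTriple t c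
  adjoin_eq_top := adjoin_generators_eq_top t c
  exists_algHom := exists_algHom

end CherednikA1

/-- PBW theorem for the type `A₁` rational Cherednik algebra: the monomials
`x^a ξ^b` and `x^a s ξ^b` (`a, b ∈ ℕ`) form a ℂ-basis of `H_{t,c}`. -/
theorem cherednikA1_pbw (t c : ℂ) :
    LinearIndependent ℂ
      (fun p : ℕ × Bool × ℕ =>
        CherednikA1.x t c ^ p.1 * (if p.2.1 then CherednikA1.S t c else 1) *
          CherednikA1.xi t c ^ p.2.2) ∧
    Submodule.span ℂ
        (Set.range fun p : ℕ × Bool × ℕ =>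
          CherednikA1.x t c ^ p.1 * (if p.2.1 then CherednikA1.S t c else 1) *
            CherednikA1.xi t c ^ p.2.2) = ⊤ :=
  cherednikA1_pbw_general (CherednikA1.isCherednikPresentation t c)
end

section
/- The two-sided ideal of H_{t,c} generated by the element 1 + s is equal to H_{t,c} if and only if 2c ≠ −t. Equivalently, for the symmetrizing idempotent e = (1 + s)/2, one has H_{t,c}·e·H_{t,c} = H_{t,c} if and only if 2c + t ≠ 0. -/
/-!
Modulo `1 + s` one has `s = -1`, so `s x + x s = 0` forces `x = 0` because `2` is invertible, and
the commutation relation `ξ x - x ξ = t - 2 c s` collapses to the scalar identity `2c + t = 0`.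
Conversely, when this scalar vanishes, `s ↦ -1`, `x, ξ ↦ 0` is a character of `H_{t,c}` killing
`1 + s`.
-/

open FreeAlgebra

theorem twoSidedIdeal_span_ne_top_of_map_eq_zero {A B F : Type*} [NonAssocRing A]
    [NonAssocSemiring B] [Nontrivial B] [FunLike F A B] [RingHomClass F A B] (f : F) {G : Set A}
    (hf : ∀ a ∈ G, f a = 0) : TwoSidedIdeal.span G ≠ ⊤ := by
  intro htop
  have hle : TwoSidedIdeal.span G ≤ TwoSidedIdeal.ker f :=
    TwoSidedIdeal.span_le.2 fun a ha => (TwoSidedIdeal.mem_ker f).2 (hf a ha)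
  have hone : (1 : A) ∈ TwoSidedIdeal.ker f := hle (htop ▸ TwoSidedIdeal.mem_top A)
  exact one_ne_zero ((map_one f).symm.trans ((TwoSidedIdeal.mem_ker f).1 hone))

section TwoSidedIdeal

variable {A : Type*} [Ring A] {I : TwoSidedIdeal A} {s x : A}

theorem twoSidedIdeal_eq_top_of_isUnit_mem {u : A} (hu : IsUnit u) (h : u ∈ I) : I = ⊤ :=
  I.one_mem_iff.1 ((I.asIdeal.unit_mul_mem_iff_mem hu).1 (by simpa using h))

theorem two_mul_mem_of_anticomm_of_one_add_mem (hs : 1 + s ∈ I) (hsx : s * x + x * s = 0) :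
    2 * x ∈ I := by
  have hsum : (1 + s) * x + x * (1 + s) = 2 * x :=
    calc (1 + s) * x + x * (1 + s) = 2 * x + (s * x + x * s) := by noncomm_ring
      _ = 2 * x := by rw [hsx, add_zero]
  exact hsum ▸ I.add_mem (I.mul_mem_right _ _ hs) (I.mul_mem_left _ _ hs)

theorem mem_of_anticomm_of_one_add_mem (h2 : IsUnit (2 : A)) (hs : 1 + s ∈ I)
    (hsx : s * x + x * s = 0) : x ∈ I :=
  (I.asIdeal.unit_mul_mem_iff_mem h2).1 (two_mul_mem_of_anticomm_of_one_add_mem hs hsx)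

theorem algebraMap_add_mem_of_commutator_eq {R : Type*} [CommSemiring R] [Algebra R A] {t k : R}
    {ξ : A} (hs : 1 + s ∈ I) (hx : x ∈ I) (hξx : ξ * x - x * ξ = algebraMap R A t - k • s) :
    algebraMap R A (k + t) ∈ I := by
  have hcomm : ξ * x - x * ξ ∈ I := I.sub_mem (I.mul_mem_left _ _ hx) (I.mul_mem_right _ _ hx)
  have hscalar : algebraMap R A (k + t) = ξ * x - x * ξ + algebraMap R A k * (1 + s) := by
    rw [hξx, map_add, mul_add, mul_one, Algebra.smul_def]
    abel
  exact hscalar ▸ I.add_mem hcomm (I.mul_mem_left _ _ hs)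

end TwoSidedIdeal

namespace CherednikA1

variable (t c : ℂ)

/-- The generator `x` of `H_{t,c}`. -/
noncomputable def X : CherednikA1 t c :=
  RingQuot.mkAlgHom ℂ (CherednikRel t c) (ι ℂ (1 : Fin 3))

/-- The generator `ξ` of `H_{t,c}`. -/
noncomputable def Xi : CherednikA1 t c :=
  RingQuot.mkAlgHom ℂ (CherednikRel t c) (ι ℂ (2 : Fin 3))

theorem S_mul_X_add_X_mul_S : S t c * X t c + X t c * S t c = 0 := by
  simpa only [map_add, map_mul, map_zero] using!
    RingQuot.mkAlgHom_rel ℂ (CherednikRel.s_x (t := t) (c := c))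

theorem Xi_mul_X_sub_X_mul_Xi :
    Xi t c * X t c - X t c * Xi t c = algebraMap ℂ _ t - (2 * c) • S t c := by
  have hrel : Xi t c * X t c - X t c * Xi t c - algebraMap ℂ _ t + (2 * c) • S t c = 0 := by
    simpa only [map_add, map_sub, map_mul, map_smul, AlgHom.commutes, map_zero] using!
      RingQuot.mkAlgHom_rel ℂ (CherednikRel.xi_x (t := t) (c := c))
  rw [← sub_eq_zero, ← hrel]
  abel

variable {t c}

theorem algebraMap_mem_of_one_add_S_mem {I : TwoSidedIdeal (CherednikA1 t c)}
    (hs : 1 + S t c ∈ I) : algebraMap ℂ (CherednikA1 t c) (2 * c + t) ∈ I := by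
  have h2 : IsUnit (2 : CherednikA1 t c) := by
    simpa only [map_ofNat] using
      (IsUnit.mk0 (2 : ℂ) two_ne_zero).map (algebraMap ℂ (CherednikA1 t c))
  have hx : X t c ∈ I := mem_of_anticomm_of_one_add_mem h2 hs (S_mul_X_add_X_mul_S t c)
  exact algebraMap_add_mem_of_commutator_eq hs hx (Xi_mul_X_sub_X_mul_Xi t c)

section lift

variable {A : Type*} [Ring A] [Algebra ℂ A] {s x ξ : A} (hs : s * s = 1)
  (hsx : s * x + x * s = 0) (hsξ : s * ξ + ξ * s = 0)
  (hξx : ξ * x - x * ξ = algebraMap ℂ A t - (2 * c) • s)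

/-- The universal property of `H_{t,c}`: elements `s`, `x`, `ξ` of an algebra satisfying the
defining relations determine an algebra homomorphism from `H_{t,c}`. -/
noncomputable def lift : CherednikA1 t c →ₐ[ℂ] A :=
  RingQuot.liftAlgHom ℂ ⟨FreeAlgebra.lift ℂ ![s, x, ξ], by
    rintro _ _ (_ | _ | _ | _)
    · simp [hs]
    · simp [hsx]
    · simp [hsξ]
    · simp [hξx]⟩

theorem lift_S : lift hs hsx hsξ hξx (S t c) = s := by
  simp [lift, S]

end lift

/-- The character `s ↦ -1`, `x, ξ ↦ 0` of `H_{t,c}`, which exists when `2c + t = 0`. -/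
noncomputable def signChar (h : 2 * c + t = 0) : CherednikA1 t c →ₐ[ℂ] ℂ :=
  lift (s := -1) (x := 0) (ξ := 0) (by norm_num) (by simp) (by simp) <| by
    simp only [mul_zero, sub_zero, Algebra.algebraMap_self_apply, smul_eq_mul]
    linear_combination -h

theorem signChar_one_add_S (h : 2 * c + t = 0) : signChar h (1 + S t c) = 0 := by
  rw [signChar, map_add, map_one, lift_S, add_neg_cancel]

end CherednikA1

/-- The two-sided ideal of `H_{t,c}` generated by `1 + s` is the whole algebra if and
only if `2c + t ≠ 0`; equivalently, `H e H = H` for the symmetrizing idempotent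
`e = (1+s)/2` if and only if `2c ≠ -t`. -/
theorem cherednikA1_eHe_eq_top_iff (t c : ℂ) :
    TwoSidedIdeal.span ({1 + CherednikA1.S t c} : Set (CherednikA1 t c)) = ⊤ ↔
      2 * c + t ≠ 0 := by
  constructor
  · intro htop h
    refine twoSidedIdeal_span_ne_top_of_map_eq_zero (CherednikA1.signChar h) ?_ htop
    rintro _ rfl
    exact CherednikA1.signChar_one_add_S h
  · intro hne
    have hs := TwoSidedIdeal.subset_span (Set.mem_singleton (1 + CherednikA1.S t c))
    have hunit := (IsUnit.mk0 _ hne).map (algebraMap ℂ (CherednikA1 t c))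
    exact twoSidedIdeal_eq_top_of_isUnit_mem hunit
      (CherednikA1.algebraMap_mem_of_one_add_S_mem hs)
end
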